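/- Transport relation for Ohno's cyclic connected sum at infinity: for every nonempty index k=(k_1,…,k_a), one has Z^O_∞(k_→) = Z^O_∞(←k) + ζ-series(k_↑) as an identity in [0,∞], where ζ-series(k_↑) := Σ_{0<n_1<⋯<n_a} (∏_{i=1}^{a−1} n_i^{−k_i})·n_a^{−(k_a+1)}. -/

import Mathlib

open scoped Classical ENNReal

noncomputable section

/-- Last value of a tuple, with default `d` for the empty tuple. -/
def lastD {c : ℕ} (d : ℕ) (f : Fin c → ℕ) : ℕ :=
  if h : 0 < c then f ⟨c - 1, Nat.sub_lt h Nat.one_pos⟩ else d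

/-- First value of a tuple, with default `d` for the empty tuple. -/
def headD {c : ℕ} (d : ℕ) (f : Fin c → ℕ) : ℕ :=
  if h : 0 < c then f ⟨0, h⟩ else d

/-- Ohno's cyclic connected sum at infinity `Z^O_∞(k)`: the sum in `[0,∞]` of
`n₁^(-(k₁-1)) · (∏_{i≥2} nᵢ^(-kᵢ)) · (nₐ - n₁)⁻¹` over `0 < n₁ < ⋯ < nₐ`. -/
def ZOinf (k : List ℕ) : ℝ≥0∞ :=
  ∑' n : Fin k.length → ℕ,
    Set.indicator {n : Fin k.length → ℕ | (∀ i, 0 < n i) ∧ StrictMono n}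
      (fun n =>
        (∏ i, ((n i : ℝ≥0∞) ^ (if i.1 = 0 then k.get i - 1 else k.get i))⁻¹) *
          (((lastD 0 n - headD 0 n : ℕ) : ℝ≥0∞))⁻¹) n

/-- The multiple-zeta-type series of `k_↑`:
`Σ_{0 < n₁ < ⋯ < nₐ} (∏_{i<a} nᵢ^(-kᵢ)) · nₐ^(-(kₐ+1))`, in `[0,∞]`. -/
def zetaUp (k : List ℕ) : ℝ≥0∞ :=
  ∑' n : Fin k.length → ℕ,
    Set.indicator {n : Fin k.length → ℕ | (∀ i, 0 < n i) ∧ StrictMono n}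
      (fun n =>
        ∏ i, ((n i : ℝ≥0∞) ^
          (if i.1 = k.length - 1 then k.get i + 1 else k.get i))⁻¹) n

theorem tsum_prodx {α β : Type*} (f : α × β → ℝ≥0∞) :
    ∑' p, f p = ∑' a, ∑' b, f (a, b) :=
  ENNReal.tsum_prod (f := fun a b => f (a, b))

theorem aux_tele (p : ℕ) (hp : 0 < p) :
    HasSum (fun j : ℕ => 1 / (((p : ℝ) + j) * (p + j + 1))) (1 / (p : ℝ)) := by
  rw [hasSum_iff_tendsto_nat_of_nonneg (fun j => by positivity)]
  have h : ∀ M : ℕ, ∑ j ∈ Finset.range M, 1 / (((p : ℝ) + j) * (p + j + 1))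
      = 1 / (p : ℝ) - 1 / ((p : ℝ) + M) := by
    intro M
    have hp' : (0 : ℝ) < p := by exact_mod_cast hp
    induction M with
    | zero => simp
    | succ M ih =>
      rw [Finset.sum_range_succ, ih]
      push_cast
      field_simp
      ring
  simp_rw [h]
  have h1 : Filter.Tendsto (fun M : ℕ => 1 / ((p : ℝ) + M)) Filter.atTop (nhds 0) := by
    have := (tendsto_one_div_atTop_nhds_zero_nat (𝕜 := ℝ)).comp (Filter.tendsto_add_atTop_nat p)
    refine this.congr (fun M => ?_)
    simp [add_comm]
  simpa using h1.const_sub (1 / (p : ℝ))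

theorem aux_fin (x : ℝ) (h : ℕ) (hx : (h : ℝ) < x) :
    ∑ l ∈ Finset.range h, 1 / ((x - 1 - l) * (x - l)) = h * x⁻¹ * (x - h)⁻¹ := by
  induction h with
  | zero => simp
  | succ h ih =>
    push_cast at hx
    have h0 : (0 : ℝ) ≤ h := Nat.cast_nonneg h
    rw [Finset.sum_range_succ, ih (by linarith)]
    have h1 : x ≠ 0 := by linarith
    have h2 : x - h ≠ 0 := by linarith
    have h3 : x - 1 - h ≠ 0 := by linarith
    have h4 : x - (h + 1) ≠ 0 := by linarith
    push_cast
    field_simp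
    ring

theorem aux_real (N h : ℕ) (hN : h ≤ N) :
    HasSum (fun j : ℕ => (h : ℝ) * ((N : ℝ) + 1 + j)⁻¹ * ((N : ℝ) + 1 + j - h)⁻¹)
      (∑ l ∈ Finset.range h, 1 / ((N : ℝ) - l)) := by
  have := hasSum_sum (s := Finset.range h)
    (f := fun l (j : ℕ) => 1 / ((((N - l : ℕ) : ℝ) + j) * ((N - l : ℕ) + j + 1)))
    (a := fun l => 1 / ((N - l : ℕ) : ℝ))
    (fun l hl => aux_tele _ (by simp at hl; omega))
  convert this using 1
  · funext j
    have hN' : (h : ℝ) ≤ N := by exact_mod_cast hN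
    have hj : (0 : ℝ) ≤ j := Nat.cast_nonneg j
    rw [← aux_fin _ _ (by linarith)]
    refine Finset.sum_congr rfl (fun l hl => ?_)
    simp at hl
    rw [Nat.cast_sub (by omega)]
    congr 2 <;> ring
  · refine Finset.sum_congr rfl (fun l hl => ?_)
    simp at hl
    rw [Nat.cast_sub (by omega)]

theorem aux_enn (N h : ℕ) (h0 : 0 < h) (hN : h ≤ N) :
    (∑' m : ℕ, if N < m then (h : ℝ≥0∞) * (m : ℝ≥0∞)⁻¹ * ((m - h : ℕ) : ℝ≥0∞)⁻¹ else 0)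
      = (∑' l : ℕ, if 0 < l ∧ l < h then ((N - l : ℕ) : ℝ≥0∞)⁻¹ else 0) + (N : ℝ≥0∞)⁻¹ := by
  have hcast : ∀ m : ℕ, 0 < m → (m : ℝ≥0∞)⁻¹ = ENNReal.ofReal ((m : ℝ)⁻¹) := by
    intro m hm
    rw [ENNReal.ofReal_inv_of_pos (by exact_mod_cast hm), ENNReal.ofReal_natCast]
  have hL : (∑' m : ℕ, if N < m then (h : ℝ≥0∞) * (m : ℝ≥0∞)⁻¹ * ((m - h : ℕ) : ℝ≥0∞)⁻¹ else 0)
      = ∑' j : ℕ, ENNReal.ofReal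
        ((h : ℝ) * ((N : ℝ) + 1 + j)⁻¹ * ((N : ℝ) + 1 + j - h)⁻¹) := by
    rw [← Summable.sum_add_tsum_nat_add' (k := N + 1) ENNReal.summable]
    rw [Finset.sum_eq_zero, zero_add]
    · refine tsum_congr (fun j => ?_)
      rw [if_pos (by omega), hcast _ (by omega), hcast _ (by omega), Nat.cast_sub (by omega),
        ← ENNReal.ofReal_natCast, ← ENNReal.ofReal_mul (by positivity),
        ← ENNReal.ofReal_mul (by positivity)]
      push_cast
      congr 3 <;> ring
    · intro m hm
      simp at hm
      rw [if_neg (by omega)]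
  have hs := aux_real N h hN
  rw [hL, ← ENNReal.ofReal_tsum_of_nonneg _ hs.summable, hs.tsum_eq]
  · rw [ENNReal.ofReal_sum_of_nonneg]
    · rw [tsum_eq_sum (s := Finset.range h)]
      · obtain ⟨g, rfl⟩ : ∃ g, h = g + 1 := ⟨h - 1, by omega⟩
        rw [Finset.sum_range_succ', Finset.sum_range_succ' _ g]
        simp only [lt_self_iff_false, false_and, if_false, add_zero]
        congr 1
        · refine Finset.sum_congr rfl (fun l hl => ?_)
          simp at hl
          rw [if_pos (by omega), hcast _ (by omega), Nat.cast_sub (by omega), one_div]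
        · rw [hcast _ (by omega)]
          simp
      · intro l hl
        simp at hl
        rw [if_neg (by omega)]
    · intro l hl
      simp at hl
      have : (l : ℝ) ≤ N := by exact_mod_cast (by omega : l ≤ N)
      have : 0 ≤ (N : ℝ) - l := by linarith
      positivity
  · intro j
    have hN' : (h : ℝ) ≤ N := by exact_mod_cast hN
    have hj : (0 : ℝ) ≤ j := Nat.cast_nonneg j
    have : 0 ≤ (N : ℝ) + 1 + j - h := by linarith
    positivity

/-- `ZOinf` for exponents given as a function. -/
def ZF (L : ℕ) (κ : Fin L → ℕ) : ℝ≥0∞ :=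
  ∑' n : Fin L → ℕ,
    Set.indicator {n : Fin L → ℕ | (∀ i, 0 < n i) ∧ StrictMono n}
      (fun n =>
        (∏ i, ((n i : ℝ≥0∞) ^ (if i.1 = 0 then κ i - 1 else κ i))⁻¹) *
          (((lastD 0 n - headD 0 n : ℕ) : ℝ≥0∞))⁻¹) n

/-- `zetaUp` for exponents given as a function. -/
def GF (L : ℕ) (κ : Fin L → ℕ) : ℝ≥0∞ :=
  ∑' n : Fin L → ℕ,
    Set.indicator {n : Fin L → ℕ | (∀ i, 0 < n i) ∧ StrictMono n}
      (fun n =>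
        ∏ i, ((n i : ℝ≥0∞) ^ (if i.1 = L - 1 then κ i + 1 else κ i))⁻¹) n

theorem ZOinf_eq (k : List ℕ) : ZOinf k = ZF k.length k.get := rfl

theorem zetaUp_eq (k : List ℕ) : zetaUp k = GF k.length k.get := rfl

theorem ZF_cast {L L' : ℕ} (h : L = L') (κ : Fin L → ℕ) (κ' : Fin L' → ℕ)
    (hκ : ∀ i, κ i = κ' (Fin.cast h i)) : ZF L κ = ZF L' κ' := by
  subst h
  congr 1
  funext i
  exact hκ i

theorem snoc_valid (c : ℕ) (n : Fin (c + 1) → ℕ) (m : ℕ) :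
    ((∀ i, 0 < (Fin.snoc n m : Fin (c + 2) → ℕ) i) ∧ StrictMono (Fin.snoc n m : Fin (c + 2) → ℕ))
      ↔ ((∀ i, 0 < n i) ∧ StrictMono n) ∧ n (Fin.last c) < m := by
  constructor
  · rintro ⟨h1, h2⟩
    refine ⟨⟨fun i => by simpa using h1 i.castSucc, fun i j hij => ?_⟩, ?_⟩
    · simpa using h2 (Fin.castSucc_lt_castSucc_iff.2 hij)
    · simpa using h2 (Fin.castSucc_lt_last (Fin.last c))
  · rintro ⟨⟨h1, h2⟩, h3⟩
    refine ⟨fun i => ?_, fun i j hij => ?_⟩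
    · induction i using Fin.lastCases with
      | last => simp; omega
      | cast i => simpa using h1 i
    · induction j using Fin.lastCases with
      | last =>
        induction i using Fin.lastCases with
        | last => simp at hij
        | cast i =>
          simp only [Fin.snoc_castSucc, Fin.snoc_last]
          exact lt_of_le_of_lt (h2.monotone (Fin.le_last i)) h3
      | cast j =>
        induction i using Fin.lastCases with
        | last => exact absurd hij (not_lt.2 (Fin.le_last _))
        | cast i =>
          simp only [Fin.snoc_castSucc]
          exact h2 (Fin.castSucc_lt_castSucc_iff.1 hij)

theorem cons_valid (c : ℕ) (n : Fin (c + 1) → ℕ) (m : ℕ) :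
    ((∀ i, 0 < (Fin.cons m n : Fin (c + 2) → ℕ) i) ∧ StrictMono (Fin.cons m n : Fin (c + 2) → ℕ))
      ↔ ((∀ i, 0 < n i) ∧ StrictMono n) ∧ (0 < m ∧ m < n 0) := by
  constructor
  · rintro ⟨h1, h2⟩
    refine ⟨⟨fun i => by simpa using h1 i.succ, fun i j hij => ?_⟩, by simpa using h1 0, ?_⟩
    · simpa using h2 (Fin.succ_lt_succ_iff.2 hij)
    · simpa using h2 (Fin.succ_pos (0 : Fin (c + 1)))
  · rintro ⟨⟨h1, h2⟩, h3, h4⟩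
    refine ⟨fun i => ?_, fun i j hij => ?_⟩
    · induction i using Fin.cases with
      | zero => simpa using h3
      | succ i => simpa using h1 i
    · induction j using Fin.cases with
      | zero => exact absurd hij (not_lt.2 (Fin.zero_le _))
      | succ j =>
        induction i using Fin.cases with
        | zero =>
          simp only [Fin.cons_zero, Fin.cons_succ]
          exact lt_of_lt_of_le h4 (h2.monotone (Fin.zero_le j))
        | succ i =>
          simp only [Fin.cons_succ]
          exact h2 (Fin.succ_lt_succ_iff.1 hij)

theorem lastD_succ (c : ℕ) (n : Fin (c + 1) → ℕ) : lastD 0 n = n (Fin.last c) := by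
  simp [lastD, Fin.last]

theorem headD_succ (c : ℕ) (n : Fin (c + 1) → ℕ) : headD 0 n = n 0 := by
  simp [headD]

theorem ZF_snoc (c : ℕ) (κ : Fin (c + 1) → ℕ) (hκ : 1 ≤ κ 0) :
    ZF (c + 2) (Fin.snoc κ 1 : Fin (c + 2) → ℕ) = ∑' n : Fin (c + 1) → ℕ,
      if (∀ i, 0 < n i) ∧ StrictMono n then (∏ i, ((n i : ℝ≥0∞) ^ κ i)⁻¹) *
        ∑' m : ℕ, (if n (Fin.last c) < m then
          (n 0 : ℝ≥0∞) * (m : ℝ≥0∞)⁻¹ * ((m - n 0 : ℕ) : ℝ≥0∞)⁻¹ else 0) else 0 := by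
  unfold ZF
  rw [← (Fin.snocEquiv (fun _ : Fin (c + 2) => ℕ)).tsum_eq]
  rw [← (Equiv.prodComm (Fin (c + 1) → ℕ) ℕ).tsum_eq]
  rw [tsum_prodx]
  refine tsum_congr (fun n => ?_)
  by_cases hn : (∀ i, 0 < n i) ∧ StrictMono n
  · rw [if_pos hn, ← ENNReal.tsum_mul_left]
    refine tsum_congr (fun m => ?_)
    change Set.indicator _ _ (Fin.snoc n m : Fin (c + 2) → ℕ) = _
    rw [Set.indicator_apply]
    simp only [Set.mem_ofPred_eq, snoc_valid]
    by_cases hm : n (Fin.last c) < m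
    · rw [if_pos ⟨hn, hm⟩, if_pos hm, lastD_succ, headD_succ, Fin.prod_univ_castSucc]
      have e0 : (Fin.snoc n m : Fin (c + 2) → ℕ) 0 = n 0 := by
        rw [← Fin.castSucc_zero, Fin.snoc_castSucc]
      simp only [Fin.snoc_castSucc, Fin.snoc_last, e0]
      rw [Fin.prod_univ_succ, Fin.prod_univ_succ]
      have hp : ((n 0 : ℝ≥0∞) ^ (κ 0 - 1))⁻¹ = ((n 0 : ℝ≥0∞) ^ κ 0)⁻¹ * (n 0 : ℝ≥0∞) := by
        obtain ⟨q, hq⟩ : ∃ q, κ 0 = q + 1 := ⟨κ 0 - 1, by omega⟩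
        have hn0 : (n 0 : ℝ≥0∞) ≠ 0 := by
          have := hn.1 0
          exact_mod_cast this.ne'
        rw [hq, Nat.add_sub_cancel, pow_succ,
          ENNReal.mul_inv (Or.inr (ENNReal.natCast_ne_top _)) (Or.inr hn0), mul_assoc,
          ENNReal.inv_mul_cancel hn0 (ENNReal.natCast_ne_top _), mul_one]
      simp [hp]
      ring
    · rw [if_neg (fun h => hm h.2), if_neg hm, mul_zero]
  · rw [if_neg hn]
    refine ENNReal.tsum_eq_zero.2 (fun m => ?_)
    change Set.indicator _ _ (Fin.snoc n m : Fin (c + 2) → ℕ) = _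
    refine Set.indicator_of_notMem ?_ _
    simp only [Set.mem_ofPred_eq, snoc_valid]
    exact fun h => hn h.1

theorem ZF_cons (c : ℕ) (κ : Fin (c + 1) → ℕ) :
    ZF (c + 2) (Fin.cons 1 κ : Fin (c + 2) → ℕ) = ∑' n : Fin (c + 1) → ℕ,
      if (∀ i, 0 < n i) ∧ StrictMono n then (∏ i, ((n i : ℝ≥0∞) ^ κ i)⁻¹) *
        ∑' l : ℕ, (if 0 < l ∧ l < n 0 then
          ((n (Fin.last c) - l : ℕ) : ℝ≥0∞)⁻¹ else 0) else 0 := by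
  unfold ZF
  rw [← (Fin.consEquiv (fun _ : Fin (c + 2) => ℕ)).tsum_eq]
  rw [← (Equiv.prodComm (Fin (c + 1) → ℕ) ℕ).tsum_eq]
  rw [tsum_prodx]
  refine tsum_congr (fun n => ?_)
  by_cases hn : (∀ i, 0 < n i) ∧ StrictMono n
  · rw [if_pos hn, ← ENNReal.tsum_mul_left]
    refine tsum_congr (fun m => ?_)
    change Set.indicator _ _ (Fin.cons m n : Fin (c + 2) → ℕ) = _
    rw [Set.indicator_apply]
    simp only [Set.mem_ofPred_eq, cons_valid]
    by_cases hm : 0 < m ∧ m < n 0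
    · rw [if_pos ⟨hn, hm⟩, if_pos hm, lastD_succ, headD_succ, Fin.prod_univ_succ]
      have e0 : (Fin.cons m n : Fin (c + 2) → ℕ) (Fin.last (c + 1)) = n (Fin.last c) := by
        rw [← Fin.succ_last, Fin.cons_succ]
      simp only [Fin.cons_succ, Fin.cons_zero, e0]
      simp
    · rw [if_neg (fun h => hm h.2), if_neg hm, mul_zero]
  · rw [if_neg hn]
    refine ENNReal.tsum_eq_zero.2 (fun m => ?_)
    change Set.indicator _ _ (Fin.cons m n : Fin (c + 2) → ℕ) = _
    refine Set.indicator_of_notMem ?_ _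
    simp only [Set.mem_ofPred_eq, cons_valid]
    exact fun h => hn h.1

theorem GF_eq (c : ℕ) (κ : Fin (c + 1) → ℕ) :
    GF (c + 1) κ = ∑' n : Fin (c + 1) → ℕ,
      if (∀ i, 0 < n i) ∧ StrictMono n then (∏ i, ((n i : ℝ≥0∞) ^ κ i)⁻¹) *
        (n (Fin.last c) : ℝ≥0∞)⁻¹ else 0 := by
  unfold GF
  refine tsum_congr (fun n => ?_)
  rw [Set.indicator_apply]
  simp only [Set.mem_ofPred_eq]
  by_cases hn : (∀ i, 0 < n i) ∧ StrictMono n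
  · rw [if_pos hn, if_pos hn, Fin.prod_univ_castSucc, Fin.prod_univ_castSucc]
    have hn0 : (n (Fin.last c) : ℝ≥0∞) ≠ 0 := by
      have := hn.1 (Fin.last c)
      exact_mod_cast this.ne'
    have h1 : ∀ i : Fin c, (i.castSucc.1 = c + 1 - 1) = False := by
      intro i
      have := i.2
      simp
      omega
    simp only [h1, if_false]
    rw [if_pos (by simp), pow_succ,
      ENNReal.mul_inv (Or.inr (ENNReal.natCast_ne_top _)) (Or.inr hn0), mul_assoc]
  · rw [if_neg hn, if_neg hn]

theorem ZF_transport (L : ℕ) (κ : Fin L → ℕ) (hL : 0 < L) (hκ : ∀ i, 1 ≤ κ i) :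
    ZF (L + 1) (Fin.snoc κ 1 : Fin (L + 1) → ℕ)
      = ZF (L + 1) (Fin.cons 1 κ : Fin (L + 1) → ℕ) + GF L κ := by
  obtain ⟨c, rfl⟩ : ∃ c, L = c + 1 := ⟨L - 1, by omega⟩
  rw [ZF_snoc c κ (hκ 0), ZF_cons, GF_eq, ← ENNReal.tsum_add]
  refine tsum_congr (fun n => ?_)
  by_cases hn : (∀ i, 0 < n i) ∧ StrictMono n
  · rw [if_pos hn, if_pos hn, if_pos hn, ← mul_add,
      aux_enn _ _ (hn.1 0) (hn.2.monotone (Fin.zero_le _))]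
  · simp [if_neg hn]

theorem get_append_one (k : List ℕ) (h : (k ++ [1]).length = k.length + 1)
    (i : Fin (k ++ [1]).length) :
    (k ++ [1]).get i = (Fin.snoc k.get 1 : Fin (k.length + 1) → ℕ) (Fin.cast h i) := by
  obtain ⟨i, hi⟩ := i
  simp only [Fin.snoc, List.get_eq_getElem, List.getElem_append]
  by_cases h : i < k.length <;> simp [h]

theorem ZOinf_append (k : List ℕ) :
    ZOinf (k ++ [1]) = ZF (k.length + 1) (Fin.snoc k.get 1 : Fin (k.length + 1) → ℕ) := by
  have h : (k ++ [1]).length = k.length + 1 := by simp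
  generalize hs : (Fin.snoc k.get 1 : Fin (k.length + 1) → ℕ) = s
  have h2 : ∀ i, (k ++ [1]).get i = s (Fin.cast h i) := by
    intro i
    rw [← hs]
    exact get_append_one k h i
  exact (ZOinf_eq (k ++ [1])).trans (ZF_cast h _ _ h2)

theorem ZOinf_cons (k : List ℕ) :
    ZOinf (1 :: k) = ZF (k.length + 1) (Fin.cons 1 k.get : Fin (k.length + 1) → ℕ) := by
  rw [ZOinf_eq]
  have h : (1 :: k).length = k.length + 1 := rfl
  refine ZF_cast h (1 :: k).get (Fin.cons 1 k.get : Fin (k.length + 1) → ℕ) (fun i => ?_)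
  induction i using Fin.cases with
  | zero => rfl
  | succ i => rfl

/-- **Transport relation for Ohno's cyclic connected sum at infinity:**
`Z^O_∞(k_→) = Z^O_∞(←k) + ζ(k_↑)` in `[0,∞]` for every nonempty index `k`;
here `k_→ = k ++ [1]` and `←k = 1 :: k`. -/
theorem ZOinf_transport (k : List ℕ) (hk : k ≠ []) (hk1 : ∀ i ∈ k, 1 ≤ i) :
    ZOinf (k ++ [1]) = ZOinf (1 :: k) + zetaUp k := by
  have h := ZF_transport k.length k.get (List.length_pos_iff.2 hk)
    (fun i => hk1 _ (List.get_mem k i))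
  rw [zetaUp_eq, ZOinf_append, ZOinf_cons, h]
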